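/- Let 𝓘 be an ideal on ℕ and let x : ℕ → ℝ^k be an 𝓘-bounded sequence, i.e., there exists a constant c such that {n : ‖x n‖ > c} ∈ 𝓘. Then a point ℓ belongs to the 𝓘-core of x if and only if there exist k+1 𝓘-cluster points z₁, …, z_{k+1} of x such that ℓ lies in the convex hull of {z₁, …, z_{k+1}}. -/

import Mathlib

open Filter Topology

/-- Caratheodory with exactly `k + 1` points. -/
lemma exists_fin_of_mem_convexHull {k : ℕ} {s : Set (EuclideanSpace ℝ (Fin k))}
    {p : EuclideanSpace ℝ (Fin k)} (hp : p ∈ convexHull ℝ s) :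
    ∃ z : Fin (k + 1) → EuclideanSpace ℝ (Fin k), (∀ i, z i ∈ s) ∧
      p ∈ convexHull ℝ (Set.range z) := by
  rw [convexHull_eq_union] at hp
  simp only [exists_prop, Set.mem_iUnion] at hp
  obtain ⟨t, ht, hind, hpt⟩ := hp
  have hcard : Fintype.card t ≤ k + 1 := by
    have h1 := hind.card_le_finrank_succ
    have h2 := Submodule.finrank_le (vectorSpan ℝ (Set.range ((↑) : t → EuclideanSpace ℝ (Fin k))))
    rw [finrank_euclideanSpace_fin] at h2
    omega
  have hne : Nonempty t := by
    have : (convexHull ℝ (t : Set (EuclideanSpace ℝ (Fin k)))).Nonempty := ⟨p, hpt⟩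
    rw [convexHull_nonempty_iff] at this
    exact this.to_subtype
  obtain ⟨e⟩ : Nonempty (t ↪ Fin (k + 1)) :=
    Function.Embedding.nonempty_of_card_le (by simpa using hcard)
  refine ⟨fun i => (Function.invFun e i : t), fun i => ht (Function.invFun e i).2, ?_⟩
  refine convexHull_mono ?_ hpt
  intro y hy
  exact ⟨e ⟨y, hy⟩, by simp [Function.leftInverse_invFun e.injective ⟨y, hy⟩]⟩

lemma convexHull_range_eq_image_stdSimplex {n : ℕ} {V : Type*} [AddCommGroup V] [Module ℝ V]
    (z : Fin n → V) :
    convexHull ℝ (Set.range z) = (fun w : Fin n → ℝ => ∑ i, w i • z i) '' stdSimplex ℝ (Fin n) := by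
  have := LinearMap.image_convexHull (Fintype.linearCombination ℝ z)
    (Set.range fun i : Fin n => (Pi.single i 1 : Fin n → ℝ))
  rw [convexHull_rangle_single_eq_stdSimplex, ← Set.range_comp] at this
  have h2 : (⇑(Fintype.linearCombination ℝ z) ∘ fun i : Fin n => (Pi.single i 1 : Fin n → ℝ)) = z := by
    ext1 i
    simp
  rw [h2] at this
  rw [← this]
  rfl

lemma isCompact_convexHull_euclidean {k : ℕ} {s : Set (EuclideanSpace ℝ (Fin k))}
    (hs : IsCompact s) : IsCompact (convexHull ℝ s) := by
  have hc : IsCompact ((stdSimplex ℝ (Fin (k + 1))) ×ˢ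
      (Set.univ.pi fun _ : Fin (k + 1) => s)) :=
    (isCompact_stdSimplex ℝ (Fin (k + 1))).prod (isCompact_univ_pi fun _ => hs)
  have hf : Continuous (fun q : (Fin (k + 1) → ℝ) × (Fin (k + 1) → EuclideanSpace ℝ (Fin k)) =>
      ∑ i, q.1 i • q.2 i) := by fun_prop
  convert hc.image hf using 1
  ext p
  constructor
  · intro hp
    obtain ⟨z, hz, hpz⟩ := exists_fin_of_mem_convexHull hp
    rw [convexHull_range_eq_image_stdSimplex] at hpz
    obtain ⟨w, hw, rfl⟩ := hpz
    exact ⟨(w, z), ⟨hw, fun i _ => hz i⟩, rfl⟩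
  · rintro ⟨⟨w, z⟩, ⟨hw, hz⟩, rfl⟩
    have : ∑ i, w i • z i ∈ convexHull ℝ (Set.range z) := by
      rw [convexHull_range_eq_image_stdSimplex]
      exact ⟨w, hw, rfl⟩
    refine convexHull_mono ?_ this
    rintro _ ⟨i, rfl⟩
    exact hz i trivial

/-- Corollary 2.3 (second part): a point `ℓ` belongs to the `𝓘`-core of an `𝓘`-bounded
sequence `x` in `ℝ^k` if and only if `ℓ` lies in the convex hull of `k + 1` many
`𝓘`-cluster points of `x`. The ideal `𝓘` is represented by its dual filter `F`. -/
theorem mem_icore_iff_mem_convexHull_clusterPts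
    {k : ℕ} (F : Filter ℕ) (hF : F ≤ Filter.cofinite) [F.NeBot]
    (x : ℕ → EuclideanSpace ℝ (Fin k))
    (hx : ∃ c : ℝ, {n : ℕ | ‖x n‖ ≤ c} ∈ F)
    (ℓ : EuclideanSpace ℝ (Fin k)) :
    ℓ ∈ ⋂ E ∈ F, closedConvexHull ℝ (x '' E) ↔
      ∃ z : Fin (k + 1) → EuclideanSpace ℝ (Fin k),
        (∀ i, MapClusterPt (z i) F x) ∧ ℓ ∈ convexHull ℝ (Set.range z) := by
  constructor
  · intro hl
    obtain ⟨c, hc⟩ := hx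
    have hbd : ∀ᶠ n in F, x n ∈ Metric.closedBall (0 : EuclideanSpace ℝ (Fin k)) c := by
      filter_upwards [hc] with n hn
      simpa using hn
    have hcomp : IsCompact {p | MapClusterPt p F x} := by
      refine (isCompact_closedBall (0 : EuclideanSpace ℝ (Fin k)) c).of_isClosed_subset
        isClosed_setOfPred_clusterPt ?_
      intro p hp
      exact Metric.isClosed_closedBall.mem_of_mapClusterPt hp hbd
    suffices h : ℓ ∈ convexHull ℝ {p | MapClusterPt p F x} from exists_fin_of_mem_convexHull h
    by_contra hn
    obtain ⟨f, u, hfu, hfb⟩ := geometric_hahn_banach_point_closed (convex_convexHull ℝ _)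
      (isCompact_convexHull_euclidean hcomp).isClosed hn
    have hE : ∀ᶠ n in F, u ≤ f (x n) := by
      by_contra hcon
      have hfr : ∃ᶠ n in F, x n ∈ Metric.closedBall (0 : EuclideanSpace ℝ (Fin k)) c ∩
          {p | f p ≤ u} := by
        rw [Filter.not_eventually] at hcon
        refine (hcon.and_eventually hbd).mono ?_
        rintro n ⟨h1, h2⟩
        exact ⟨h2, (not_le.mp h1).le⟩
      obtain ⟨a, ha, hac⟩ := ((isCompact_closedBall _ _).inter_right
        (isClosed_le f.continuous continuous_const)).exists_mapClusterPt_of_frequently hfr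
      exact absurd (hfb a (subset_convexHull ℝ _ hac)) (not_lt.mpr ha.2)
    have h1 : ℓ ∈ closedConvexHull ℝ (x '' {n | u ≤ f (x n)}) := Set.mem_iInter₂.mp hl _ hE
    have h2 : closedConvexHull ℝ (x '' {n | u ≤ f (x n)}) ⊆ {p | u ≤ f p} := by
      refine closedConvexHull_min ?_ (convex_halfSpace_ge f.toLinearMap.isLinear u)
        (isClosed_le continuous_const f.continuous)
      rintro _ ⟨n, hn, rfl⟩
      exact hn
    exact absurd hfu (not_lt.mpr (h2 h1))
  · rintro ⟨z, hz, hl⟩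
    refine Set.mem_iInter₂.mpr fun E hE => ?_
    refine convexHull_min ?_ convex_closedConvexHull hl
    rintro _ ⟨i, rfl⟩
    refine isClosed_closedConvexHull.mem_of_mapClusterPt (hz i) ?_
    filter_upwards [hE] with n hn
    exact subset_closedConvexHull ⟨n, hn, rfl⟩
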